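/- Let M = (M_0, M_1, M_2, …) be an increasing sequence of positive real numbers with M_0 = 1 that is logarithmically convex, satisfies lim_{j→∞} (M_j)^{1/j} = ∞, and satisfies sup_{j≥1} (M_{j+1}/M_j)^{1/j} < ∞. Then C^ℝ_M is closed under inverse: let U and V be open subsets of ℝ^N and let φ = (φ_1, …, φ_N) : U → V be a map with φ_i ∈ C^ℝ_M(U) for 1 ≤ i ≤ N; let a ∈ U with φ(a) = b, and suppose the Jacobian matrix (∂φ_i/∂x_j)(a) is invertible. Then there exist open neighborhoods U′ of a and V′ of b and a mapping ψ = (ψ_1, …, ψ_N) : V′ → U′ such that ψ_i ∈ C^ℝ_M(V′) for 1 ≤ i ≤ N, ψ(b) = a, and φ ∘ ψ is the identity mapping on V′. -/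

import Mathlib

/-- The `i`-th partial derivative of a function on Euclidean space. -/
noncomputable def pd {ι : Type} [Fintype ι] [DecidableEq ι] {W : Type} [NormedAddCommGroup W]
    [NormedSpace ℝ W] (i : ι) (f : EuclideanSpace ℝ ι → W) : EuclideanSpace ℝ ι → W :=
  fun x => fderiv ℝ f x (EuclideanSpace.single i 1)

/-- The multi-index derivative `D^α f`. -/
noncomputable def mderiv {ι : Type} [Fintype ι] [DecidableEq ι] {W : Type} [NormedAddCommGroup W]
    [NormedSpace ℝ W] (α : ι → ℕ) (f : EuclideanSpace ℝ ι → W) : EuclideanSpace ℝ ι → W :=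
  (Finset.univ : Finset ι).toList.foldr (fun i g => (pd i)^[α i] g) f

/-- Membership in the real Denjoy-Carleman class `C^ℝ_M(U)`: `f` is `C^∞` on `U` and on every
compact `K ⊆ U` there are `A, B > 0` with `|(1/α!) D^α f(x)| ≤ A B^{|α|} M_{|α|}`. -/
def CRM {ι : Type} [Fintype ι] [DecidableEq ι] (M : ℕ → ℝ)
    (U : Set (EuclideanSpace ℝ ι)) (f : EuclideanSpace ℝ ι → ℝ) : Prop :=
  ContDiffOn ℝ (⊤ : ℕ∞) f U ∧
  ∀ K : Set (EuclideanSpace ℝ ι), K ⊆ U → IsCompact K →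
    ∃ A B : ℝ, 0 < A ∧ 0 < B ∧ ∀ x ∈ K, ∀ α : ι → ℕ,
      (1 / (∏ i, ((α i).factorial : ℝ))) * |mderiv α f x| ≤
        A * B ^ (∑ i, α i) * M (∑ i, α i)


noncomputable def nd {E F : Type} [NormedAddCommGroup E] [NormedSpace ℝ E]
    [NormedAddCommGroup F] [NormedSpace ℝ F] (j : ℕ) (f : E → F) (x : E) : ℝ :=
  ‖iteratedFDeriv ℝ j f x‖ / j.factorial

section core
variable {E F G W : Type} [NormedAddCommGroup E] [NormedSpace ℝ E]
    [NormedAddCommGroup F] [NormedSpace ℝ F] [NormedAddCommGroup G] [NormedSpace ℝ G]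
    [NormedAddCommGroup W] [NormedSpace ℝ W]

lemma nd_nonneg (j : ℕ) (f : E → F) (x : E) : 0 ≤ nd j f x := by
  unfold nd; positivity

lemma nd_zero (f : E → F) (x : E) : nd 0 f x = ‖f x‖ := by
  simp [nd]

lemma nd_congr {S : Set E} (hS : IsOpen S) {f g : E → F} (h : Set.EqOn f g S) {x : E} (hx : x ∈ S)
    (j : ℕ) : nd j f x = nd j g x := by
  unfold nd
  rw [((h.eventuallyEq_of_mem (hS.mem_nhds hx)).iteratedFDeriv ℝ j).eq_of_nhds]

lemma nd_fderiv (j : ℕ) (f : E → F) (x : E) : nd j (fderiv ℝ f) x = (j + 1) * nd (j + 1) f x := by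
  unfold nd
  rw [norm_iteratedFDeriv_fderiv, Nat.factorial_succ]
  push_cast
  field_simp

lemma nd_leib (B : F →L[ℝ] G →L[ℝ] W) (hB : ‖B‖ ≤ 1) {S : Set E} (hS : IsOpen S)
    {f : E → F} {g : E → G} (hf : ContDiffOn ℝ (⊤ : ℕ∞) f S) (hg : ContDiffOn ℝ (⊤ : ℕ∞) g S)
    {x : E} (hx : x ∈ S) (j : ℕ) :
    nd j (fun y => B (f y) (g y)) x ≤ ∑ i ∈ Finset.range (j + 1), nd i f x * nd (j - i) g x := by
  have h := B.norm_iteratedFDerivWithin_le_of_bilinear_of_le_one hf hg hS.uniqueDiffOn hx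
    (n := j) (by exact_mod_cast le_top) hB
  simp only [iteratedFDerivWithin_of_isOpen _ hS hx] at h
  unfold nd
  rw [div_le_iff₀ (by positivity), Finset.sum_mul]
  refine h.trans (Finset.sum_le_sum fun i hi => le_of_eq ?_)
  have hij : i ≤ j := by simpa [Nat.lt_succ_iff] using hi
  have := Nat.choose_mul_factorial_mul_factorial hij
  rw [← this]
  push_cast
  field_simp

/-- geometric recursion -/
lemma geom_rec (J : ℕ) (g : ℕ → ℝ) (L A b : ℝ) (hL : 0 ≤ L) (hA : 0 ≤ A) (hb : 0 ≤ b)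
    (h0 : g 0 ≤ L)
    (h : ∀ j, 1 ≤ j → j ≤ J → g j ≤ ∑ i ∈ Finset.range j, g i * (L * A * b ^ (j - i))) :
    ∀ j, j ≤ J → g j ≤ L * ((1 + L * A) * b) ^ j := by
  intro j
  induction j using Nat.strong_induction_on with
  | _ j ih =>
    intro hj
    rcases Nat.eq_zero_or_pos j with rfl | hpos
    · simpa using h0
    refine (h j hpos hj).trans ?_
    have h1 : ∑ i ∈ Finset.range j, g i * (L * A * b ^ (j - i)) ≤
        ∑ i ∈ Finset.range j, L * b ^ j * (L * A * (1 + L * A) ^ i) := by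
      refine Finset.sum_le_sum fun i hi => ?_
      have hij : i < j := by simpa using hi
      have := ih i hij (by omega)
      calc g i * (L * A * b ^ (j - i)) ≤ (L * ((1 + L * A) * b) ^ i) * (L * A * b ^ (j - i)) := by
            gcongr
        _ = L * (b ^ i * b ^ (j - i)) * (L * A * (1 + L * A) ^ i) := by rw [mul_pow]; ring
        _ = _ := by rw [← pow_add, Nat.add_sub_cancel' hij.le]
    refine h1.trans ?_
    rw [← Finset.mul_sum, ← Finset.mul_sum]
    have h2 := mul_geom_sum (1 + L * A) j
    rw [add_sub_cancel_left] at h2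
    rw [h2, mul_pow]
    have : 0 ≤ L * b ^ j := by positivity
    nlinarith

/-- The data of a smooth local inverse pair. -/
structure InvPair (S : Set E) (T : Set F) (Φ : E → F) (Ψ : F → E) : Prop where
  hS : IsOpen S
  hT : IsOpen T
  mΦ : Set.MapsTo Φ S T
  mΨ : Set.MapsTo Ψ T S
  cΦ : ContDiffOn ℝ (⊤ : ℕ∞) Φ S
  cΨ : ContDiffOn ℝ (⊤ : ℕ∞) Ψ T
  li : ∀ x ∈ S, Ψ (Φ x) = x
  ri : ∀ y ∈ T, Φ (Ψ y) = y

lemma smooth_diffAt {S : Set E} (hS : IsOpen S) {f : E → F} (hf : ContDiffOn ℝ (⊤ : ℕ∞) f S) {x : E}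
    (hx : x ∈ S) : DifferentiableAt ℝ f x :=
  (hf.differentiableOn (by simp)).differentiableAt (hS.mem_nhds hx)

lemma smooth_fderiv {S : Set E} (hS : IsOpen S) {f : E → F} (hf : ContDiffOn ℝ (⊤ : ℕ∞) f S) :
    ContDiffOn ℝ (⊤ : ℕ∞) (fderiv ℝ f) S :=
  hf.fderiv_of_isOpen hS (by simp)

namespace InvPair
variable {S : Set E} {T : Set F} {Φ : E → F} {Ψ : F → E}

lemma comp_right (P : InvPair S T Φ Ψ) {x : E} (hx : x ∈ S) :
    (fderiv ℝ Φ x).comp (fderiv ℝ Ψ (Φ x)) = ContinuousLinearMap.id ℝ F := by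
  have h1 := smooth_diffAt P.hT P.cΨ (P.mΦ hx)
  have h2 := smooth_diffAt P.hS P.cΦ hx
  have h3 : fderiv ℝ (Φ ∘ Ψ) (Φ x) = (fderiv ℝ Φ (Ψ (Φ x))).comp (fderiv ℝ Ψ (Φ x)) :=
    fderiv_comp _ (by rwa [P.li x hx]) h1
  rw [P.li x hx] at h3
  rw [← h3]
  have : Φ ∘ Ψ =ᶠ[nhds (Φ x)] id :=
    Filter.eventually_of_mem (P.hT.mem_nhds (P.mΦ hx)) (fun y hy => P.ri y hy)
  rw [this.fderiv_eq, fderiv_id]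

lemma comp_left (P : InvPair S T Φ Ψ) {x : E} (hx : x ∈ S) :
    (fderiv ℝ Ψ (Φ x)).comp (fderiv ℝ Φ x) = ContinuousLinearMap.id ℝ E := by
  have h1 := smooth_diffAt P.hT P.cΨ (P.mΦ hx)
  have h2 := smooth_diffAt P.hS P.cΦ hx
  have h3 : fderiv ℝ (Ψ ∘ Φ) x = (fderiv ℝ Ψ (Φ x)).comp (fderiv ℝ Φ x) :=
    fderiv_comp _ h1 h2
  rw [← h3]
  have : Ψ ∘ Φ =ᶠ[nhds x] id :=
    Filter.eventually_of_mem (P.hS.mem_nhds hx) (fun y hy => P.li y hy)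
  rw [this.fderiv_eq, fderiv_id]

lemma smoothG (P : InvPair S T Φ Ψ) {h : F → W} (hh : ContDiffOn ℝ (⊤ : ℕ∞) h T) : ContDiffOn ℝ (⊤ : ℕ∞) (h ∘ Φ) S :=
  hh.comp P.cΦ P.mΦ

lemma G_bound (P : InvPair S T Φ Ψ) {x : E} (hx : x ∈ S) (J : ℕ) (L A b : ℝ) (hA : 0 ≤ A) (hb : 0 ≤ b)
    (hL : ‖fderiv ℝ Ψ (Φ x)‖ ≤ L)
    (hΦ : ∀ j, 1 ≤ j → j ≤ J → nd j (fderiv ℝ Φ) x ≤ A * b ^ j) :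
    ∀ j, j ≤ J → nd j (fderiv ℝ Ψ ∘ Φ) x ≤ L * ((1 + L * A) * b) ^ j := by
  have hL0 : 0 ≤ L := (norm_nonneg _).trans hL
  refine geom_rec J _ L A b hL0 hA hb (by rw [nd_zero]; exact hL) ?_
  intro j hj hjJ
  set G0 := fderiv ℝ Ψ (Φ x) with hG0
  set H : E → (E →L[ℝ] E) := fun z => G0.comp (fderiv ℝ Φ x - fderiv ℝ Φ z) with hH
  set C := (ContinuousLinearMap.compL ℝ F E E).flip with hC
  have hCn : ‖C‖ ≤ 1 := by
    rw [hC, ContinuousLinearMap.opNorm_flip]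
    exact ContinuousLinearMap.norm_compL_le ℝ F E E
  have sG := P.smoothG (smooth_fderiv P.hT P.cΨ)
  have sΦ := smooth_fderiv P.hS P.cΦ
  have sK : ContDiffOn ℝ (⊤ : ℕ∞) (fun z => fderiv ℝ Φ x - fderiv ℝ Φ z) S :=
    contDiffOn_const.sub sΦ
  have sH : ContDiffOn ℝ (⊤ : ℕ∞) H S :=
    ((ContinuousLinearMap.compL ℝ E F E) G0).contDiff.comp_contDiffOn sK
  have heq : Set.EqOn (fderiv ℝ Ψ ∘ Φ)
      (fun z => G0 + C ((fderiv ℝ Ψ ∘ Φ) z) (H z)) S := by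
    intro z hz
    have e1 := P.comp_right hz
    have e2 := P.comp_left hx
    ext v
    have e1' := congrArg (fun T => T v) e1
    have e2' := fun v => congrArg (fun T => T v) e2
    simp only [ContinuousLinearMap.comp_apply, ContinuousLinearMap.id_apply] at e1' e2'
    simp [hC, hH, e1', e2', hG0]
  have hconst : nd j (fderiv ℝ Ψ ∘ Φ) x = nd j (fun z => C ((fderiv ℝ Ψ ∘ Φ) z) (H z)) x := by
    rw [nd_congr P.hS heq hx]
    unfold nd
    have hs : ContDiffOn ℝ (⊤ : ℕ∞) (fun z => C ((fderiv ℝ Ψ ∘ Φ) z) (H z)) S :=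
      C.isBoundedBilinearMap.contDiff.comp_contDiffOn (sG.prodMk sH)
    have hs' : ContDiffAt ℝ j (fun z => C ((fderiv ℝ Ψ ∘ Φ) z) (H z)) x :=
      (hs.contDiffAt (P.hS.mem_nhds hx)).of_le (by exact_mod_cast le_top)
    rw [fun_iteratedFDeriv_add_apply (contDiffAt_const) hs', iteratedFDeriv_const_of_ne (by omega)]
    simp
  rw [hconst]
  refine (nd_leib C hCn P.hS sG sH hx j).trans ?_
  rw [Finset.sum_range_succ]
  have hz : nd (j - j) H x = 0 := by
    rw [Nat.sub_self, nd_zero]; simp [hH]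
  rw [hz, mul_zero, add_zero]
  refine Finset.sum_le_sum fun i hi => ?_
  have hij : i < j := by simpa using hi
  refine mul_le_mul_of_nonneg_left ?_ (nd_nonneg _ _ _)
  have hk : j - i ≠ 0 := by omega
  have hk1 := hΦ (j - i) (by omega) (by omega)
  generalize j - i = k at *
  have sK' : ContDiffAt ℝ k (fun z => fderiv ℝ Φ x - fderiv ℝ Φ z) x :=
    (sK.contDiffAt (P.hS.mem_nhds hx)).of_le (by exact_mod_cast le_top)
  have sΦ' : ContDiffAt ℝ k (fun z => fderiv ℝ Φ z) x :=
    (sΦ.contDiffAt (P.hS.mem_nhds hx)).of_le (by exact_mod_cast le_top)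
  have hA1 : nd k H x ≤ ‖G0‖ * nd k (fderiv ℝ Φ) x := by
    unfold nd
    rw [← mul_div_assoc]
    refine div_le_div_of_nonneg_right ?_ (by positivity)
    have := ((ContinuousLinearMap.compL ℝ E F E) G0).norm_iteratedFDeriv_comp_left sK' (n := k) le_rfl
    refine this.trans ?_
    have e : ‖iteratedFDeriv ℝ k (fun z => fderiv ℝ Φ x - fderiv ℝ Φ z) x‖ =
        ‖iteratedFDeriv ℝ k (fderiv ℝ Φ) x‖ := by
      have := fun_iteratedFDeriv_sub_apply (𝕜 := ℝ) (i := k) (x := x) (f := fun _ => fderiv ℝ Φ x)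
        (g := fun z => fderiv ℝ Φ z) contDiffAt_const sΦ'
      rw [this, iteratedFDeriv_const_of_ne hk]
      simp
    rw [e]
    gcongr
    exact ContinuousLinearMap.opNorm_le_bound _ (norm_nonneg _)
      (fun f => ContinuousLinearMap.opNorm_comp_le G0 f)
  calc nd k H x ≤ ‖G0‖ * nd k (fderiv ℝ Φ) x := hA1
    _ ≤ L * (A * b ^ k) := mul_le_mul hL hk1 (nd_nonneg _ _ _) hL0
    _ = _ := by ring

lemma step (P : InvPair S T Φ Ψ) {x : E} (hx : x ∈ S) (C ρ : ℝ) (hρ : 0 ≤ ρ) (J s : ℕ) (A : ℝ) (hA : 0 ≤ A)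
    (hG : ∀ j, j ≤ J → nd j (fderiv ℝ Ψ ∘ Φ) x ≤ C * ρ ^ j)
    {h : F → W} (hh : ContDiffOn ℝ (⊤ : ℕ∞) h T)
    (hb : ∀ j, j ≤ J + 1 → nd j (h ∘ Φ) x ≤ A * ρ ^ j * ((s + j).choose s : ℕ)) :
    ∀ j, j ≤ J → nd j (fderiv ℝ h ∘ Φ) x ≤ (A * C * ρ * (s + 1)) * ρ ^ j * ((s + 2 + j).choose (s + 2) : ℕ) := by
  intro j hj
  have sG := P.smoothG (smooth_fderiv P.hT P.cΨ)
  have sh := smooth_fderiv P.hS (P.smoothG hh)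
  have heq : Set.EqOn (fderiv ℝ h ∘ Φ)
      (fun z => (ContinuousLinearMap.compL ℝ F E W) (fderiv ℝ (h ∘ Φ) z) ((fderiv ℝ Ψ ∘ Φ) z)) S := by
    intro z hz
    have e1 := P.comp_right hz
    have e3 : fderiv ℝ (h ∘ Φ) z = (fderiv ℝ h (Φ z)).comp (fderiv ℝ Φ z) :=
      fderiv_comp _ (smooth_diffAt P.hT hh (P.mΦ hz)) (smooth_diffAt P.hS P.cΦ hz)
    simp only [Function.comp_apply, ContinuousLinearMap.compL_apply, e3]
    rw [ContinuousLinearMap.comp_assoc, e1, ContinuousLinearMap.comp_id]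
  rw [nd_congr P.hS heq hx]
  refine (nd_leib _ (ContinuousLinearMap.norm_compL_le ℝ F E W) P.hS sh sG hx j).trans ?_
  have hs : ∀ i ∈ Finset.range (j + 1), nd i (fderiv ℝ (h ∘ Φ)) x * nd (j - i) (fderiv ℝ Ψ ∘ Φ) x ≤
      (A * C * ρ * (s + 1)) * ρ ^ j * ((i + (s + 1)).choose (s + 1) : ℕ) := by
    intro i hi
    have hij : i ≤ j := by simpa [Nat.lt_succ_iff] using hi
    rw [nd_fderiv]
    have h1 := hb (i + 1) (by omega)
    have h2 := hG (j - i) (by omega)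
    have h3 : ((i : ℝ) + 1) * ((s + (i + 1)).choose s : ℕ) = (s + 1) * ((i + (s + 1)).choose (s + 1) : ℕ) := by
      have := Nat.choose_succ_right_eq (s + (i + 1)) s
      rw [show s + (i + 1) - s = i + 1 by omega] at this
      rw [show i + (s + 1) = s + (i + 1) by ring]
      have t : (((s + (i + 1)).choose (s + 1) * (s + 1) : ℕ) : ℝ) = (((s + (i + 1)).choose s * (i + 1) : ℕ) : ℝ) := by
        rw [this]
      push_cast at t
      linarith
    calc (i + 1) * nd (i + 1) (h ∘ Φ) x * nd (j - i) (fderiv ℝ Ψ ∘ Φ) x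
        ≤ ((i + 1) * (A * ρ ^ (i + 1) * ((s + (i + 1)).choose s : ℕ))) * (C * ρ ^ (j - i)) := by
          refine mul_le_mul (by gcongr) h2 (nd_nonneg _ _ _) (by positivity)
      _ = A * C * ρ * (ρ ^ i * ρ ^ (j - i)) * (((i : ℝ) + 1) * ((s + (i + 1)).choose s : ℕ)) := by ring
      _ = _ := by rw [← pow_add, Nat.add_sub_cancel' hij, h3]; ring
  refine (Finset.sum_le_sum hs).trans (le_of_eq ?_)
  rw [← Finset.mul_sum, ← Nat.cast_sum, Nat.sum_range_add_choose]
  congr 3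
  ring

end InvPair

end core

lemma InvPair.iter {E F : Type} [NormedAddCommGroup E] [NormedSpace ℝ E]
    [NormedAddCommGroup F] [NormedSpace ℝ F] {S : Set E} {T : Set F} {Φ : E → F} {Ψ : F → E}
    (P : InvPair S T Φ Ψ) {x : E} (hx : x ∈ S) (C ρ : ℝ) (hC : 0 ≤ C) (hρ : 0 ≤ ρ) (n : ℕ)
    (hG : ∀ j, j ≤ n → nd j (fderiv ℝ Ψ ∘ Φ) x ≤ C * ρ ^ j) :
    ∀ (k s : ℕ) (A : ℝ), k ≤ n → 0 ≤ A → ∀ (W : Type) [NormedAddCommGroup W] [NormedSpace ℝ W]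
      (h : F → W), ContDiffOn ℝ (⊤ : ℕ∞) h T →
      (∀ j, j ≤ k → nd j (h ∘ Φ) x ≤ A * ρ ^ j * ((s + j).choose s : ℕ)) →
      ‖iteratedFDeriv ℝ k h (Φ x)‖ ≤ A * (C * ρ) ^ k * ∏ i ∈ Finset.range k, ((s : ℝ) + 1 + 2 * i) := by
  intro k
  induction k with
  | zero =>
    intro s A _ _ W _ _ h _ hb
    have := hb 0 le_rfl
    simpa [nd] using this
  | succ k ih =>
    intro s A hk hA W _ _ h hh hb
    have h1 := P.step hx C ρ hρ k s A hA (fun j hj => hG j (by omega)) hh hb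
    have h2 := ih (s + 2) (A * C * ρ * (s + 1)) (by omega) (by positivity) (F →L[ℝ] W) (fderiv ℝ h)
      (smooth_fderiv P.hT hh) h1
    rw [norm_iteratedFDeriv_fderiv] at h2
    refine h2.trans (le_of_eq ?_)
    rw [Finset.prod_range_succ']
    have : ∀ i : ℕ, ((s + 2 : ℕ) : ℝ) + 1 + 2 * i = s + 1 + 2 * ((i + 1 : ℕ) : ℝ) := by
      intro i; push_cast; ring
    simp only [this]
    push_cast
    ring

lemma prod_odd_le (k : ℕ) : ∏ i ∈ Finset.range k, (((0 : ℕ) : ℝ) + 1 + 2 * i) ≤ 2 ^ k * k.factorial := by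
  induction k with
  | zero => simp
  | succ k ih =>
    rw [Finset.prod_range_succ, Nat.factorial_succ, pow_succ]
    push_cast at *
    have : (0 : ℝ) ≤ 2 ^ k * k.factorial := by positivity
    calc _ ≤ (2 ^ k * k.factorial : ℝ) * (0 + 1 + 2 * k) := by gcongr
      _ ≤ (2 ^ k * k.factorial : ℝ) * (2 * (k + 1)) := by gcongr; linarith
      _ = _ := by ring

/-- Quantitative inverse estimate. -/
lemma InvPair.main {E F : Type} [NormedAddCommGroup E] [NormedSpace ℝ E]
    [NormedAddCommGroup F] [NormedSpace ℝ F] {S : Set E} {T : Set F} {Φ : E → F} {Ψ : F → E}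
    (P : InvPair S T Φ Ψ) {x : E} (hx : x ∈ S) (L A B R : ℝ) (hA : 0 ≤ A) (hB : 0 ≤ B) (hR : 0 ≤ R)
    (hL : ‖fderiv ℝ Ψ (Φ x)‖ ≤ L) (n : ℕ)
    (hΦ : ∀ j, j ≤ n → nd (j + 1) Φ x ≤ A * B ^ (j + 1) * R ^ j) :
    ‖iteratedFDeriv ℝ (n + 1) Ψ (Φ x)‖ ≤
      L * (L * ((1 + L * (A * B)) * (2 * B)) * 2) ^ n * R ^ n * n.factorial := by
  have hL0 : 0 ≤ L := (norm_nonneg _).trans hL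
  have h1 : ∀ j, 1 ≤ j → j ≤ n → nd j (fderiv ℝ Φ) x ≤ (A * B) * (2 * B * R) ^ j := by
    intro j _ hj
    rw [nd_fderiv]
    have h2 : (j : ℝ) + 1 ≤ 2 ^ j := by
      have := Nat.lt_two_pow_self (n := j)
      exact_mod_cast this
    calc (j + 1) * nd (j + 1) Φ x ≤ 2 ^ j * (A * B ^ (j + 1) * R ^ j) :=
          mul_le_mul h2 (hΦ j hj) (nd_nonneg _ _ _) (by positivity)
      _ = _ := by rw [mul_pow, mul_pow, pow_succ]; ring
  have h3 := P.G_bound hx n L (A * B) (2 * B * R) (by positivity) (by positivity) hL h1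
  have h4 := P.iter hx L ((1 + L * (A * B)) * (2 * B * R)) hL0 (by positivity) n h3 n 0 L le_rfl hL0
    _ (fderiv ℝ Ψ) (smooth_fderiv P.hT P.cΨ) (by simpa using h3)
  rw [norm_iteratedFDeriv_fderiv] at h4
  refine h4.trans ?_
  calc _ ≤ L * (L * ((1 + L * (A * B)) * (2 * B * R))) ^ n * (2 ^ n * n.factorial) := by
        gcongr; exact prod_odd_le n
    _ = _ := by simp only [mul_pow]; ring

section partials
variable {ι : Type} [Fintype ι] [DecidableEq ι] {W : Type} [NormedAddCommGroup W] [NormedSpace ℝ W]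

/-- iterated partial derivative along a list -/
noncomputable def pdl (l : List ι) (f : EuclideanSpace ℝ ι → W) : EuclideanSpace ℝ ι → W :=
  l.foldr (fun i g => pd i g) f

lemma pd_congr {S : Set (EuclideanSpace ℝ ι)} (hS : IsOpen S) {f g : EuclideanSpace ℝ ι → W}
    (h : Set.EqOn f g S) (i : ι) : Set.EqOn (pd i f) (pd i g) S := by
  intro x hx
  unfold pd
  rw [(h.eventuallyEq_of_mem (hS.mem_nhds hx)).fderiv_eq]

lemma pd_smooth {S : Set (EuclideanSpace ℝ ι)} (hS : IsOpen S) {f : EuclideanSpace ℝ ι → W}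
    (hf : ContDiffOn ℝ (⊤ : ℕ∞) f S) (i : ι) : ContDiffOn ℝ (⊤ : ℕ∞) (pd i f) S :=
  (smooth_fderiv hS hf).clm_apply contDiffOn_const

lemma pdl_smooth {S : Set (EuclideanSpace ℝ ι)} (hS : IsOpen S) {f : EuclideanSpace ℝ ι → W}
    (hf : ContDiffOn ℝ (⊤ : ℕ∞) f S) (l : List ι) : ContDiffOn ℝ (⊤ : ℕ∞) (pdl l f) S := by
  induction l with
  | nil => exact hf
  | cons i l ih => exact pd_smooth hS ih i

lemma pd_comm {S : Set (EuclideanSpace ℝ ι)} (hS : IsOpen S) {f : EuclideanSpace ℝ ι → W}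
    (hf : ContDiffOn ℝ (⊤ : ℕ∞) f S) (i j : ι) : Set.EqOn (pd i (pd j f)) (pd j (pd i f)) S := by
  intro x hx
  have h1 : ∀ k : ι, ∀ v, fderiv ℝ (pd k f) x v = fderiv ℝ (fderiv ℝ f) x v (EuclideanSpace.single k 1) := by
    intro k v
    have hd := smooth_diffAt hS (smooth_fderiv hS hf) hx
    have : HasFDerivAt (pd k f) _ x := hd.hasFDerivAt.clm_apply (hasFDerivAt_const (EuclideanSpace.single k (1:ℝ)) x)
    rw [this.fderiv]
    simp
  have hs : IsSymmSndFDerivAt ℝ f x :=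
    (hf.contDiffAt (hS.mem_nhds hx)).isSymmSndFDerivAt (by
      rw [minSmoothness_of_isRCLikeNormedField]
      exact WithTop.coe_le_coe.2 (le_top : (2 : ℕ∞) ≤ ⊤))
  show fderiv ℝ (pd j f) x _ = fderiv ℝ (pd i f) x _
  rw [h1, h1]
  exact hs _ _

lemma pdl_perm {S : Set (EuclideanSpace ℝ ι)} (hS : IsOpen S) {f : EuclideanSpace ℝ ι → W}
    (hf : ContDiffOn ℝ (⊤ : ℕ∞) f S) {l l' : List ι} (h : l.Perm l') :
    Set.EqOn (pdl l f) (pdl l' f) S := by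
  induction h with
  | nil => exact fun x _ => rfl
  | cons i _ ih => exact pd_congr hS ih i
  | swap i j l => exact pd_comm hS (pdl_smooth hS hf l) _ _
  | trans _ _ h1 h2 => exact h1.trans h2

lemma pdl_eq {S : Set (EuclideanSpace ℝ ι)} (hS : IsOpen S) {f : EuclideanSpace ℝ ι → W}
    (hf : ContDiffOn ℝ (⊤ : ℕ∞) f S) (l : List ι) : ∀ x ∈ S,
    pdl l f x = iteratedFDeriv ℝ l.length f x (fun j => EuclideanSpace.single (l.get j) (1 : ℝ)) := by
  induction l with
  | nil => intro x _; simp [pdl]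
  | cons i l ih =>
    intro x hx
    show fderiv ℝ (pdl l f) x (EuclideanSpace.single i 1) = _
    have h1 : Set.EqOn (pdl l f) (fun x => iteratedFDeriv ℝ l.length f x (fun j => EuclideanSpace.single (l.get j) (1 : ℝ))) S := ih
    rw [(h1.eventuallyEq_of_mem (hS.mem_nhds hx)).fderiv_eq]
    have hd : DifferentiableAt ℝ (iteratedFDeriv ℝ l.length f) x := by
      have := (hf.contDiffAt (hS.mem_nhds hx)).iteratedFDeriv_right (m := 1) (i := l.length)
        (by exact_mod_cast le_top)
      exact this.differentiableAt (by simp)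
    have h2 := ((ContinuousMultilinearMap.apply ℝ (fun _ : Fin l.length => EuclideanSpace ℝ ι) W
      (fun j => EuclideanSpace.single (l.get j) (1 : ℝ))).hasFDerivAt.comp x hd.hasFDerivAt)
    have h3 := h2.fderiv
    simp only [Function.comp_def, ContinuousMultilinearMap.apply_apply] at h3
    rw [h3]
    simp only [List.length_cons]
    rw [iteratedFDeriv_succ_apply_left]
    rfl

/-- sorted list attached to a multi-index -/
noncomputable def midx (α : ι → ℕ) : List ι :=
  (Finset.univ : Finset ι).toList.flatMap (fun i => List.replicate (α i) i)

lemma mderiv_eq_pdl (α : ι → ℕ) (f : EuclideanSpace ℝ ι → W) : mderiv α f = pdl (midx α) f := by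
  unfold mderiv pdl midx
  rw [List.foldr_flatMap]
  congr 1
  funext i g
  induction α i with
  | zero => rfl
  | succ n ih => rw [Function.iterate_succ_apply', ih, List.replicate_succ, List.foldr_cons]

lemma midx_length (α : ι → ℕ) : (midx α).length = ∑ i, α i := by
  unfold midx
  rw [List.length_flatMap]
  simp

lemma midx_count (α : ι → ℕ) (i : ι) : (midx α).count i = α i := by
  unfold midx
  rw [List.count_flatMap]
  simp only [Function.comp_def, List.count_replicate, Finset.sum_map_toList]
  simp

lemma pdl_eq_mderiv {S : Set (EuclideanSpace ℝ ι)} (hS : IsOpen S) {f : EuclideanSpace ℝ ι → W}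
    (hf : ContDiffOn ℝ (⊤ : ℕ∞) f S) (l : List ι) :
    Set.EqOn (pdl l f) (mderiv (fun i => l.count i) f) S := by
  rw [mderiv_eq_pdl]
  refine pdl_perm hS hf (List.perm_iff_count.2 fun i => ?_)
  rw [midx_count]

lemma mderiv_le {S : Set (EuclideanSpace ℝ ι)} (hS : IsOpen S) {f : EuclideanSpace ℝ ι → ℝ}
    (hf : ContDiffOn ℝ (⊤ : ℕ∞) f S) (α : ι → ℕ) {x : EuclideanSpace ℝ ι} (hx : x ∈ S) :
    |mderiv α f x| ≤ ‖iteratedFDeriv ℝ (∑ i, α i) f x‖ := by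
  rw [mderiv_eq_pdl, pdl_eq hS hf _ x hx, ← midx_length, ← Real.norm_eq_abs]
  refine (ContinuousMultilinearMap.le_opNorm _ _).trans ?_
  simp

lemma multinomial_le_pow (α : ι → ℕ) :
    ((∑ i, α i).factorial : ℝ) ≤ (∏ i, ((α i).factorial : ℝ)) * (Fintype.card ι : ℝ) ^ (∑ i, α i) := by
  have h1 := Finset.sum_pow_eq_sum_piAntidiag (R := ℕ) (Finset.univ : Finset ι) (fun _ => 1) (∑ i, α i)
  have h2 : Nat.multinomial Finset.univ α ≤ (Fintype.card ι) ^ (∑ i, α i) := by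
    simp only [one_pow, Finset.prod_const_one, mul_one, Finset.sum_const, Finset.card_univ, smul_eq_mul] at h1
    rw [h1]
    exact Finset.single_le_sum (f := fun k => Nat.multinomial Finset.univ k) (fun _ _ => Nat.zero_le _) (by simp)
  have h3 := Nat.multinomial_spec (Finset.univ : Finset ι) α
  rw [← h3]
  push_cast
  gcongr
  exact_mod_cast h2

lemma norm_iter_le {S : Set (EuclideanSpace ℝ ι)} (hS : IsOpen S) {f : EuclideanSpace ℝ ι → ℝ}
    (hf : ContDiffOn ℝ (⊤ : ℕ∞) f S) {x : EuclideanSpace ℝ ι} (hx : x ∈ S) (k : ℕ) (c : ℝ) (hc : 0 ≤ c)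
    (h : ∀ α : ι → ℕ, ∑ i, α i = k → |mderiv α f x| ≤ c) :
    ‖iteratedFDeriv ℝ k f x‖ ≤ (Fintype.card ι : ℝ) ^ k * c := by
  refine ContinuousMultilinearMap.opNorm_le_bound (by positivity) fun v => ?_
  have hv : v = fun j => ∑ i, (v j i) • EuclideanSpace.single i (1 : ℝ) := by
    funext j
    ext i
    simp [Pi.single_apply]
  conv_lhs => rw [hv]
  rw [ContinuousMultilinearMap.map_sum]
  have hterm : ∀ r ∈ (Finset.univ : Finset (Fin k → ι)),
      ‖iteratedFDeriv ℝ k f x (fun j => (v j (r j)) • EuclideanSpace.single (r j) (1 : ℝ))‖ ≤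
        c * ∏ j, ‖v j‖ := by
    intro r _
    rw [ContinuousMultilinearMap.map_smul_univ, norm_smul, mul_comm]
    have h1 : ‖iteratedFDeriv ℝ k f x (fun j => EuclideanSpace.single (r j) (1 : ℝ))‖ ≤ c := by
      have e1 := pdl_eq hS hf (List.ofFn r) x hx
      have e2 := pdl_eq_mderiv hS hf (List.ofFn r) hx
      have e3 : ∑ i, (List.ofFn r).count i = k := by
        have := midx_length (fun i => (List.ofFn r).count i)
        rw [← this]
        have hp : (midx (fun i => (List.ofFn r).count i)).Perm (List.ofFn r) :=
          List.perm_iff_count.2 fun i => by rw [midx_count]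
        rw [hp.length_eq, List.length_ofFn]
      have e4 := h _ e3
      rw [← e2, e1] at e4
      rw [Real.norm_eq_abs]
      convert e4 using 2
      have gen : ∀ (m : ℕ) (hm : m = k) (w : Fin m → EuclideanSpace ℝ ι)
          (u : Fin k → EuclideanSpace ℝ ι), (∀ j, w j = u (Fin.cast hm j)) →
          iteratedFDeriv ℝ k f x u = iteratedFDeriv ℝ m f x w := by
        intro m hm w u hw
        subst hm
        congr 1
        funext j
        exact (hw j).symm
      refine gen _ (by simp) _ _ ?_
      intro j
      simp
      rfl
    refine mul_le_mul h1 ?_ (norm_nonneg _) hc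
    rw [norm_prod]
    exact Finset.prod_le_prod (fun _ _ => norm_nonneg _) (fun j _ => PiLp.norm_apply_le (v j) (r j))
  refine (norm_sum_le_of_le _ hterm).trans (le_of_eq ?_)
  simp
  ring

end partials

/-- log-convexity gives geometric bounds up to a fixed order -/
lemma logconv_geom (M : ℕ → ℝ) (hpos : ∀ j, 0 < M j)
    (hlog : ∀ j : ℕ, M (j+1) / M j ≤ M (j+2) / M (j+1)) (n : ℕ) :
    ∃ R : ℝ, 0 ≤ R ∧ R ^ n ≤ M (n + 1) / M 1 ∧ ∀ j, j ≤ n → M (j + 1) / M 1 ≤ R ^ j := by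
  set a : ℕ → ℝ := fun k => M (k + 1) / M 1 with ha
  set ν : ℕ → ℝ := fun k => M (k + 2) / M (k + 1) with hν
  have hν0 : ∀ k, 0 < ν k := fun k => div_pos (hpos _) (hpos _)
  have ha0 : ∀ k, 0 < a k := fun k => div_pos (hpos _) (hpos _)
  have hνm : Monotone ν := monotone_nat_of_le_succ fun k => hlog (k + 1)
  have has : ∀ k, a (k + 1) = a k * ν k := by
    intro k
    have := (hpos (k + 1)).ne'
    have := (hpos 1).ne'
    simp only [ha, hν]
    field_simp
  have ha00 : a 0 = 1 := div_self (hpos 1).ne'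
  have h1 : ∀ k m, k ≤ m + 1 → a k ≤ ν m ^ k := by
    intro k m
    induction k with
    | zero => intro _; simp [ha00]
    | succ k ih =>
      intro hk
      rw [has, pow_succ]
      exact mul_le_mul (ih (by omega)) (hνm (by omega)) (hν0 _).le (pow_nonneg (hν0 _).le _)
  have h2 : ∀ k m, k ≤ m → a k ^ m ≤ a m ^ k := by
    intro k m hkm
    induction m, hkm using Nat.le_induction with
    | base => exact le_rfl
    | succ m hkm ih =>
      rw [has, mul_pow, pow_succ]
      exact mul_le_mul ih (h1 k m (by omega)) (ha0 _).le (pow_nonneg (ha0 _).le _)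
  rcases Nat.eq_zero_or_pos n with rfl | hn
  · refine ⟨1, zero_le_one, by simp [div_self (hpos 1).ne'], ?_⟩
    intro j hj
    obtain rfl : j = 0 := by omega
    simp [div_self (hpos 1).ne']
  refine ⟨a n ^ ((n : ℝ)⁻¹), Real.rpow_nonneg (ha0 n).le _, ?_, ?_⟩
  · rw [Real.rpow_inv_natCast_pow (ha0 n).le (by omega)]
  · intro j hj
    have hR : (0 : ℝ) ≤ a n ^ ((n : ℝ)⁻¹) := Real.rpow_nonneg (ha0 n).le _
    refine le_of_pow_le_pow_left₀ (n := n) (by omega) (pow_nonneg hR _) ?_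
    rw [← pow_mul, mul_comm j n, pow_mul, Real.rpow_inv_natCast_pow (ha0 n).le (by omega)]
    exact h2 j n hj

lemma nd_euclid_le {N : ℕ} {S : Set (EuclideanSpace ℝ (Fin N))} (hS : IsOpen S)
    {Φ : EuclideanSpace ℝ (Fin N) → EuclideanSpace ℝ (Fin N)} (hΦ : ContDiffOn ℝ (⊤ : ℕ∞) Φ S)
    {x : EuclideanSpace ℝ (Fin N)} (hx : x ∈ S) (j : ℕ) :
    nd j Φ x ≤ ∑ i, nd j (fun y => Φ y i) x := by
  unfold nd
  rw [← Finset.sum_div]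
  refine div_le_div_of_nonneg_right ?_ (by positivity)
  refine ContinuousMultilinearMap.opNorm_le_bound (Finset.sum_nonneg fun _ _ => norm_nonneg _) fun v => ?_
  have hd : ContDiffAt ℝ j Φ x :=
    (hΦ.contDiffAt (hS.mem_nhds hx)).of_le (by exact_mod_cast le_top)
  have h1 : ∀ i, iteratedFDeriv ℝ j (fun y => Φ y i) x v = (iteratedFDeriv ℝ j Φ x v) i := by
    intro i
    have := (EuclideanSpace.proj i : EuclideanSpace ℝ (Fin N) →L[ℝ] ℝ).iteratedFDeriv_comp_left hd
      (i := j) le_rfl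
    have h2 := congrArg (fun T => T v) this
    simpa [Function.comp_def] using h2
  have h3 : ∀ w : EuclideanSpace ℝ (Fin N), ‖w‖ ≤ ∑ i, ‖w i‖ := by
    intro w
    have hw : w = ∑ i, (w i) • EuclideanSpace.single i (1 : ℝ) := by
      ext i
      simp [Pi.single_apply]
    conv_lhs => rw [hw]
    refine (norm_sum_le _ _).trans (le_of_eq ?_)
    simp [norm_smul]
  refine (h3 _).trans ?_
  rw [Finset.sum_mul]
  refine Finset.sum_le_sum fun i _ => ?_
  rw [← h1]
  exact ContinuousMultilinearMap.le_opNorm _ _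

lemma CRM_nd {N : ℕ} {M : ℕ → ℝ} (hpos : ∀ j, 0 < M j) {U : Set (EuclideanSpace ℝ (Fin N))}
    (hU : IsOpen U) {f : EuclideanSpace ℝ (Fin N) → ℝ} (hf : CRM M U f)
    {K : Set (EuclideanSpace ℝ (Fin N))} (hKU : K ⊆ U) (hK : IsCompact K) :
    ∃ A B : ℝ, 0 < A ∧ 0 < B ∧ ∀ x ∈ K, ∀ j, nd j f x ≤ A * B ^ j * M j := by
  obtain ⟨hs, hb⟩ := hf
  obtain ⟨A, B, hA, hB, h⟩ := hb K hKU hK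
  refine ⟨A, (N + 1) * B, hA, by positivity, fun x hx j => ?_⟩
  have hM := (hpos j).le
  unfold nd
  rw [div_le_iff₀ (by positivity)]
  have h1 := norm_iter_le hU hs (hKU hx) j (j.factorial * (A * B ^ j * M j)) (by positivity) (by
    intro α hα
    have h2 := h x hx α
    rw [hα] at h2
    have h3 : (∏ i, ((α i).factorial : ℝ)) ≤ j.factorial := by
      rw [← hα]
      exact_mod_cast Nat.le_of_dvd (Nat.factorial_pos _) (Nat.prod_factorial_dvd_factorial_sum _ _)
    have h4 : (0 : ℝ) < ∏ i, ((α i).factorial : ℝ) := Finset.prod_pos fun i _ => by positivity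
    rw [one_div, inv_mul_le_iff₀ h4] at h2
    refine h2.trans ?_
    gcongr)
  refine h1.trans ?_
  rw [Fintype.card_fin]
  calc (N : ℝ) ^ j * (j.factorial * (A * B ^ j * M j))
      ≤ (N + 1 : ℝ) ^ j * (j.factorial * (A * B ^ j * M j)) := by gcongr; linarith
    _ = _ := by rw [mul_pow]; ring

lemma InvPair.CRM_inv {N : ℕ} {M : ℕ → ℝ} (hpos : ∀ j, 0 < M j) (hM0 : M 0 = 1)
    (hlog : ∀ j : ℕ, M (j+1) / M j ≤ M (j+2) / M (j+1))
    {S T : Set (EuclideanSpace ℝ (Fin N))} {Φ Ψ : EuclideanSpace ℝ (Fin N) → EuclideanSpace ℝ (Fin N)}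
    (P : InvPair S T Φ Ψ) {U : Set (EuclideanSpace ℝ (Fin N))} (hU : IsOpen U) (hSU : S ⊆ U)
    (hφ : ∀ i, CRM M U (fun x => Φ x i)) (i : Fin N) : CRM M T (fun y => Ψ y i) := by
  have hψ : ContDiffOn ℝ (⊤ : ℕ∞) (fun y => Ψ y i) T := contDiffOn_euclidean.1 P.cΨ i
  refine ⟨hψ, fun K hKT hK => ?_⟩
  have hK' : IsCompact (Ψ '' K) := hK.image_of_continuousOn (P.cΨ.continuousOn.mono hKT)
  have hK'S : Ψ '' K ⊆ S := by
    rintro _ ⟨y, hy, rfl⟩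
    exact P.mΨ (hKT hy)
  choose A B hA hB hAB using fun i => CRM_nd hpos hU (hφ i) (hK'S.trans hSU) hK'
  set A1 := ∑ i, A i with hA1
  set B1 := ∑ i, B i with hB1
  have hA1' : 0 ≤ A1 := Finset.sum_nonneg fun i _ => (hA i).le
  have hB1' : 0 ≤ B1 := Finset.sum_nonneg fun i _ => (hB i).le
  have hΦb : ∀ x ∈ Ψ '' K, ∀ j, nd j Φ x ≤ A1 * B1 ^ j * M j := by
    intro x hx j
    refine (nd_euclid_le P.hS P.cΦ (hK'S hx) j).trans ?_
    rw [hA1, Finset.sum_mul, Finset.sum_mul]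
    refine Finset.sum_le_sum fun k _ => (hAB k x hx j).trans ?_
    have h1 : B k ≤ B1 := Finset.single_le_sum (f := B) (fun i _ => (hB i).le) (Finset.mem_univ k)
    have := (hA k).le
    have := (hB k).le
    have := (hpos j).le
    gcongr
  obtain ⟨A0, hA0⟩ := hK.exists_bound_of_continuousOn (P.cΨ.continuousOn.mono hKT)
  obtain ⟨L0, hL0⟩ := hK.exists_bound_of_continuousOn
    ((smooth_fderiv P.hT P.cΨ).continuousOn.mono hKT)
  set L := max L0 0 with hL
  have hL' : 0 ≤ L := le_max_right _ _
  set Q := L * ((1 + L * (A1 * M 1 * B1)) * (2 * B1)) * 2 with hQ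
  have hM1 := hpos 1
  have hQ' : 0 ≤ Q := by positivity
  refine ⟨max A0 0 + L / M 1 + 1, (N + 1) * (Q + 1), by positivity, by positivity, ?_⟩
  intro y hy α
  have hyT := hKT hy
  have hm := mderiv_le P.hT hψ α hyT
  have hf4 : (0 : ℝ) < ∏ i, ((α i).factorial : ℝ) := Finset.prod_pos fun i _ => by positivity
  rw [one_div, inv_mul_le_iff₀ hf4]
  refine hm.trans ?_
  have hc : ‖iteratedFDeriv ℝ (∑ i, α i) (fun y => Ψ y i) y‖ ≤ ‖iteratedFDeriv ℝ (∑ i, α i) Ψ y‖ := by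
    have hd : ContDiffAt ℝ (∑ i, α i : ℕ) Ψ y :=
      (P.cΨ.contDiffAt (P.hT.mem_nhds hyT)).of_le (by exact_mod_cast le_top)
    have := (EuclideanSpace.proj i : EuclideanSpace ℝ (Fin N) →L[ℝ] ℝ).norm_iteratedFDeriv_comp_left hd
      (n := ∑ i, α i) le_rfl
    refine this.trans (mul_le_of_le_one_left (norm_nonneg _) ?_)
    refine ContinuousLinearMap.opNorm_le_bound _ zero_le_one fun w => ?_
    rw [one_mul]
    exact PiLp.norm_apply_le w i
  refine hc.trans ?_
  have hmul := multinomial_le_pow α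
  rw [Fintype.card_fin] at hmul
  rcases hk : ∑ i, α i with _ | n
  · have hf1 : (1 : ℝ) ≤ ∏ i, ((α i).factorial : ℝ) := by
      exact_mod_cast Finset.prod_pos fun i _ => Nat.factorial_pos _
    have h1 := hA0 y hy
    rw [norm_iteratedFDeriv_zero, pow_zero, hM0, mul_one, mul_one]
    have h2 : A0 ≤ max A0 0 := le_max_left _ _
    have h3 : 0 ≤ L / M 1 := by positivity
    have h4 : 0 ≤ max A0 0 := le_max_right _ _
    nlinarith
  · rw [hk] at hmul
    obtain ⟨R, hR, hRn, hRj⟩ := logconv_geom M hpos hlog n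
    have hx : Ψ y ∈ Ψ '' K := ⟨y, hy, rfl⟩
    have hmain := P.main (hK'S hx) L (A1 * M 1) B1 R (by positivity) hB1' hR
      (by rw [P.ri y hyT]; exact (hL0 y hy).trans (le_max_left _ _)) n (by
        intro j hj
        refine (hΦb _ hx (j + 1)).trans ?_
        have h1 := hRj j hj
        rw [div_le_iff₀ hM1] at h1
        calc A1 * B1 ^ (j + 1) * M (j + 1) ≤ A1 * B1 ^ (j + 1) * (R ^ j * M 1) := by gcongr
          _ = _ := by ring)
    rw [P.ri y hyT, ← hQ] at hmain
    refine hmain.trans ?_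
    have hMn := (hpos (n + 1)).le
    have hfac : (n.factorial : ℝ) ≤ (n + 1).factorial := by exact_mod_cast Nat.factorial_le (Nat.le_succ n)
    have hQn : Q ^ n ≤ (Q + 1) ^ (n + 1) := by
      calc Q ^ n ≤ (Q + 1) ^ n := by gcongr; linarith
        _ ≤ (Q + 1) ^ (n + 1) := pow_le_pow_right₀ (by linarith) (Nat.le_succ n)
    have hNn : (N : ℝ) ^ (n + 1) ≤ (N + 1) ^ (n + 1) := by gcongr; linarith
    calc L * Q ^ n * R ^ n * n.factorial
        ≤ L * (Q + 1) ^ (n + 1) * (M (n + 1) / M 1) *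
            ((∏ i, ((α i).factorial : ℝ)) * (N + 1) ^ (n + 1)) := by
          have : (n.factorial : ℝ) ≤ (∏ i, ((α i).factorial : ℝ)) * (N + 1) ^ (n + 1) := by
            refine hfac.trans (hmul.trans ?_)
            gcongr
          gcongr
      _ = (∏ i, ((α i).factorial : ℝ)) * ((L / M 1) * ((N + 1) * (Q + 1)) ^ (n + 1) * M (n + 1)) := by
          rw [mul_pow]; ring
      _ ≤ _ := by
          have : 0 ≤ max A0 0 := le_max_right _ _
          gcongr
          linarith

/-- `C^ℝ_M` is closed under inverse (inverse function theorem in the class). -/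
theorem stmt7 {N : ℕ} (M : ℕ → ℝ)
    (hpos : ∀ j, 0 < M j) (hmono : Monotone M) (hM0 : M 0 = 1)
    (hlog : ∀ j : ℕ, M (j+1) / M j ≤ M (j+2) / M (j+1))
    (hgrow : Filter.Tendsto (fun j : ℕ => M j ^ ((1 : ℝ) / j)) Filter.atTop Filter.atTop)
    (hder : ∃ C : ℝ, ∀ j : ℕ, 1 ≤ j → (M (j+1) / M j) ^ ((1 : ℝ) / j) ≤ C)
    (U V : Set (EuclideanSpace ℝ (Fin N))) (hUopen : IsOpen U) (hVopen : IsOpen V)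
    (φ : Fin N → EuclideanSpace ℝ (Fin N) → ℝ) (hφ : ∀ i, CRM M U (φ i))
    (Φ : EuclideanSpace ℝ (Fin N) → EuclideanSpace ℝ (Fin N))
    (hΦ : ∀ x i, Φ x i = φ i x)
    (hmaps : Set.MapsTo Φ U V)
    (a b : EuclideanSpace ℝ (Fin N)) (ha : a ∈ U) (hab : Φ a = b)
    (hjac : IsUnit (Matrix.of (fun i j => pd j (φ i) a) : Matrix (Fin N) (Fin N) ℝ)) :
    ∃ U' V' : Set (EuclideanSpace ℝ (Fin N)),
      IsOpen U' ∧ IsOpen V' ∧ a ∈ U' ∧ b ∈ V' ∧ U' ⊆ U ∧ V' ⊆ V ∧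
      ∃ ψ : Fin N → EuclideanSpace ℝ (Fin N) → ℝ,
        ∃ Ψ : EuclideanSpace ℝ (Fin N) → EuclideanSpace ℝ (Fin N),
          (∀ y i, Ψ y i = ψ i y) ∧ (∀ i, CRM M V' (ψ i)) ∧ Ψ b = a ∧
          Set.MapsTo Ψ V' U' ∧ ∀ y ∈ V', Φ (Ψ y) = y := by
  have hsm : ContDiffOn ℝ (⊤ : ℕ∞) Φ U := by
    refine contDiffOn_euclidean.2 fun i => ?_
    have : (fun x => Φ x i) = φ i := funext fun x => hΦ x i
    rw [this]
    exact (hφ i).1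
  have hφ' : ∀ i, CRM M U (fun x => Φ x i) := by
    intro i
    have : (fun x => Φ x i) = φ i := funext fun x => hΦ x i
    rw [this]
    exact hφ i
  have hda := smooth_diffAt hUopen hsm ha
  have hcomp : ∀ i v, fderiv ℝ (φ i) a v = (fderiv ℝ Φ a v) i := by
    intro i v
    have h1 : φ i = (EuclideanSpace.proj i : EuclideanSpace ℝ (Fin N) →L[ℝ] ℝ) ∘ Φ :=
      funext fun x => (hΦ x i).symm
    rw [h1, ((EuclideanSpace.proj i : EuclideanSpace ℝ (Fin N) →L[ℝ] ℝ).hasFDerivAt.comp a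
      hda.hasFDerivAt).fderiv]
    rfl
  have hinj : Function.Injective (fderiv ℝ Φ a : EuclideanSpace ℝ (Fin N) →ₗ[ℝ] EuclideanSpace ℝ (Fin N)) := by
    rw [← LinearMap.ker_eq_bot, LinearMap.ker_eq_bot']
    intro v hv
    have hmv : (Matrix.of (fun i j => pd j (φ i) a) : Matrix (Fin N) (Fin N) ℝ).mulVec (fun j => v j) = 0 := by
      funext i
      have h1 : fderiv ℝ (φ i) a v = 0 := by
        rw [hcomp]
        have : fderiv ℝ Φ a v = 0 := hv
        rw [this]
        rfl
      have hw : v = ∑ j, (v j) • EuclideanSpace.single j (1 : ℝ) := by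
        ext i
        simp [Pi.single_apply]
      rw [hw, map_sum] at h1
      simp only [map_smul, smul_eq_mul] at h1
      simp only [Matrix.mulVec, dotProduct, Matrix.of_apply, Pi.zero_apply, pd]
      rw [← h1]
      exact Finset.sum_congr rfl fun j _ => mul_comm _ _
    have h2 := Matrix.mulVec_injective_of_isUnit hjac
    have h3 := h2 (hmv.trans (Matrix.mulVec_zero _).symm)
    ext j
    exact congrFun h3 j
  let e0 : EuclideanSpace ℝ (Fin N) ≃L[ℝ] EuclideanSpace ℝ (Fin N) :=
    (LinearEquiv.ofInjectiveEndo _ hinj).toContinuousLinearEquiv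
  have he0 : (e0 : EuclideanSpace ℝ (Fin N) →L[ℝ] EuclideanSpace ℝ (Fin N)) = fderiv ℝ Φ a := by
    ext v
    rfl
  have hfa : HasFDerivAt Φ (e0 : EuclideanSpace ℝ (Fin N) →L[ℝ] EuclideanSpace ℝ (Fin N)) a := by
    rw [he0]; exact hda.hasFDerivAt
  have hca : ContDiffAt ℝ (⊤ : ℕ∞) Φ a := hsm.contDiffAt (hUopen.mem_nhds ha)
  let e := hca.toOpenPartialHomeomorph Φ hfa (by simp)
  have hecoe : ∀ x, e x = Φ x := fun x => rfl
  have hae : a ∈ e.source := hca.mem_toOpenPartialHomeomorph_source hfa (by simp)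
  set Rg := Set.range ((↑) : (EuclideanSpace ℝ (Fin N) ≃L[ℝ] EuclideanSpace ℝ (Fin N)) →
    EuclideanSpace ℝ (Fin N) →L[ℝ] EuclideanSpace ℝ (Fin N)) with hRg
  have hRo : IsOpen Rg := ContinuousLinearEquiv.isOpen
  set U' := e.source ∩ (U ∩ fderiv ℝ Φ ⁻¹' Rg) with hU'
  have hU'o : IsOpen U' := e.open_source.inter
    ((smooth_fderiv hUopen hsm).continuousOn.isOpen_inter_preimage hUopen hRo)
  have hU'U : U' ⊆ U := fun x hx => hx.2.1
  set V' := e.target ∩ e.symm ⁻¹' U' with hV'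
  have hV'o : IsOpen V' := e.symm.isOpen_inter_preimage hU'o
  have haU' : a ∈ U' := ⟨hae, ha, ⟨e0, he0⟩⟩
  have hmΦ : Set.MapsTo Φ U' V' := by
    intro x hx
    refine ⟨e.map_source hx.1, ?_⟩
    show e.symm (e x) ∈ U'
    rw [e.left_inv hx.1]
    exact hx
  have hP : InvPair U' V' Φ e.symm :=
    { hS := hU'o
      hT := hV'o
      mΦ := hmΦ
      mΨ := fun y hy => hy.2
      cΦ := hsm.mono hU'U
      cΨ := by
        intro y hy
        obtain ⟨e1, he1⟩ := hy.2.2.2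
        have hyU := hU'U hy.2
        refine (e.contDiffAt_symm (f₀' := e1) hy.1 ?_ ?_).contDiffWithinAt
        · rw [he1]
          exact (smooth_diffAt hUopen hsm hyU).hasFDerivAt
        · exact hsm.contDiffAt (hUopen.mem_nhds hyU)
      li := fun x hx => e.left_inv hx.1
      ri := fun y hy => e.right_inv hy.1 }
  refine ⟨U', V', hU'o, hV'o, haU', hab ▸ hmΦ haU', hU'U, ?_, fun i y => e.symm y i, e.symm,
    fun _ _ => rfl, fun i => hP.CRM_inv hpos hM0 hlog hUopen hU'U hφ' i, ?_, hP.mΨ, hP.ri⟩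
  · intro y hy
    have := hmaps (hU'U (hP.mΨ hy))
    rwa [hP.ri y hy] at this
  · rw [← hab]
    exact hP.li a haU'
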